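/- For every endpoint p ∈ F one has I_{μ(p)}(p) ⊆ (0,1). -/

import Mathlib

open MeasureTheory Set Filter

/-- The relative measure of `H` in the interval `(p - ω, p + ω)`,
i.e. `λ(H | I_ω(p)) = λ(H ∩ I_ω(p)) / (2ω)`. -/
noncomputable def relMeasure (H : Set ℝ) (p ω : ℝ) : ℝ :=
  (volume (H ∩ Ioo (p - ω) (p + ω))).toReal / (2 * ω)

/-- A configuration: a finite increasing sequence `0 < a 0 < b 0 < a 1 < ⋯ < a (r-1) < b (r-1)`
of positive reals. -/
structure Config where
  r : ℕ
  hr : 0 < r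
  a : Fin r → ℝ
  b : Fin r → ℝ
  ha : ∀ i, 0 < a i
  hab : ∀ i, a i < b i
  hba : ∀ i j : Fin r, i < j → b i < a j

/-- The set `C = (-∞,0) ∪ ⋃ i (a i, b i)` associated to a configuration. -/
def Config.carrier (C : Config) : Set ℝ := Iio 0 ∪ ⋃ i, Ioo (C.a i) (C.b i)

/-- The endpoints of a configuration: `0` together with all the `a i` and `b i`. -/
def Config.endpoints (C : Config) : Set ℝ := insert 0 (range C.a ∪ range C.b)

/-- `C` is a counterexample to `K(δ)`: every endpoint `c` of `C` admits a radius `ω > 0`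
with `λ(C | I_ω(c)) ∉ [δ, 1-δ]`. -/
def IsCounterexample (δ : ℝ) (C : Config) : Prop :=
  ∀ c ∈ C.endpoints, ∃ ω > 0, relMeasure C.carrier c ω ∉ Icc δ (1 - δ)

/-- `ω(p) = sup {ω ≥ 0 : λ(C | I_ω(p)) ∉ (δ, 1-δ)}`. -/
noncomputable def omegaMax (C : Config) (δ p : ℝ) : ℝ :=
  sSup {ω : ℝ | 0 ≤ ω ∧ relMeasure C.carrier p ω ∉ Ioo δ (1 - δ)}

/-- An endpoint `p` is black if `λ(C | I_{ω(p)}(p)) ≥ 1 - δ`. -/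
def IsBlack (C : Config) (δ p : ℝ) : Prop :=
  p ∈ C.endpoints ∧ 1 - δ ≤ relMeasure C.carrier p (omegaMax C δ p)

/-- An endpoint `p` is white if `λ(C | I_{ω(p)}(p)) ≤ δ`. -/
def IsWhite (C : Config) (δ p : ℝ) : Prop :=
  p ∈ C.endpoints ∧ relMeasure C.carrier p (omegaMax C δ p) ≤ δ

/-!
The idea is to compare densities on concentric intervals. If every interval starting at a right
endpoint `b i < 1` had density at most `1 - 2δ`, then cutting `C` off at `b i` would preserve the
counterexample, since a piece of density `1 - 2δ` on one side averages with even a full piece on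
the other side to `1 - δ` only. So in a minimal counterexample `C` has density at least `1 - 2δ`
in every `(y, 1)` with `a 0 ≤ y`. Now let `p > 0` be black, with density maximal at radius `m`. As
`C` is empty beyond `1`, maximality forces `p + m ≤ 1`. If `p - m < 0`, enlarging the radius from
`m` to `1 - p` adds a full piece on the left and a piece of density at least `1 - 2δ` on the
right, so the density stays at least `1 - δ` and `ω(p) ≥ 1 - p`, against the choice of `v_B`. The
white case is the black case for the reflected complement of `C`.
-/

section Density

variable {H K : Set ℝ} {p ω : ℝ}

/-- The distribution function of `H`: the measure of `H` between `0` and `x`, counted negatively for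
`x < 0`. The measure of `H` in an interval is an increment of this function, which makes additivity
over adjacent intervals a matter of linear arithmetic. -/
noncomputable def cumMeasure (H : Set ℝ) (x : ℝ) : ℝ := ∫ t in (0 : ℝ)..x, H.indicator 1 t

theorem intervalIntegrable_indicator_one (hH : MeasurableSet H) (x y : ℝ) :
    IntervalIntegrable (H.indicator (1 : ℝ → ℝ)) volume x y := by
  rw [intervalIntegrable_iff]
  exact (integrableOn_const (C := (1 : ℝ)) (by simp [uIoc])).indicator hH

theorem cumMeasure_sub_cumMeasure (hH : MeasurableSet H) {x y : ℝ} (hxy : x ≤ y) :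
    cumMeasure H y - cumMeasure H x = volume.real (H ∩ Ioo x y) := by
  rw [cumMeasure, cumMeasure, intervalIntegral.integral_interval_sub_left
    (intervalIntegrable_indicator_one hH 0 y) (intervalIntegrable_indicator_one hH 0 x),
    intervalIntegral.integral_of_le hxy, integral_Ioc_eq_integral_Ioo, integral_indicator_one hH,
    measureReal_restrict_apply hH]

theorem continuous_cumMeasure (hH : MeasurableSet H) : Continuous (cumMeasure H) :=
  intervalIntegral.continuous_primitive (intervalIntegrable_indicator_one hH) 0

theorem monotone_cumMeasure (hH : MeasurableSet H) : Monotone (cumMeasure H) := fun _ _ hxy =>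
  sub_nonneg.1 (cumMeasure_sub_cumMeasure hH hxy ▸ measureReal_nonneg)

theorem cumMeasure_sub_le (hH : MeasurableSet H) {x y : ℝ} (hxy : x ≤ y) :
    cumMeasure H y - cumMeasure H x ≤ y - x := by
  rw [cumMeasure_sub_cumMeasure hH hxy, ← Real.volume_real_Ioo_of_le hxy]
  exact measureReal_mono inter_subset_right measure_Ioo_lt_top.ne

theorem cumMeasure_sub_of_Ioo_subset (hH : MeasurableSet H) {x y : ℝ} (hxy : x ≤ y)
    (h : Ioo x y ⊆ H) : cumMeasure H y - cumMeasure H x = y - x := by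
  rw [cumMeasure_sub_cumMeasure hH hxy, inter_eq_right.2 h, Real.volume_real_Ioo_of_le hxy]

theorem cumMeasure_eq_of_disjoint_Ioo (hH : MeasurableSet H) {x y : ℝ} (hxy : x ≤ y)
    (h : Disjoint H (Ioo x y)) : cumMeasure H y = cumMeasure H x := by
  rw [← sub_eq_zero, cumMeasure_sub_cumMeasure hH hxy, h.inter_eq, measureReal_empty]

theorem relMeasure_mul (hH : MeasurableSet H) (hω : 0 ≤ ω) :
    relMeasure H p ω * (2 * ω) = cumMeasure H (p + ω) - cumMeasure H (p - ω) := by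
  rcases hω.eq_or_lt with rfl | hω
  · simp
  · rw [cumMeasure_sub_cumMeasure hH (by linarith), relMeasure, Measure.real]
    exact div_mul_cancel₀ _ (by positivity)

theorem le_relMeasure_iff (hH : MeasurableSet H) (hω : 0 < ω) {c : ℝ} :
    c ≤ relMeasure H p ω ↔ c * (2 * ω) ≤ cumMeasure H (p + ω) - cumMeasure H (p - ω) := by
  rw [← relMeasure_mul hH hω.le, mul_le_mul_iff_left₀ (by positivity)]

theorem relMeasure_le_iff (hH : MeasurableSet H) (hω : 0 < ω) {c : ℝ} :
    relMeasure H p ω ≤ c ↔ cumMeasure H (p + ω) - cumMeasure H (p - ω) ≤ c * (2 * ω) := by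
  rw [← relMeasure_mul hH hω.le, mul_le_mul_iff_left₀ (by positivity)]

theorem relMeasure_nonneg (hω : 0 ≤ ω) : 0 ≤ relMeasure H p ω :=
  div_nonneg ENNReal.toReal_nonneg (by positivity)

theorem relMeasure_mono (hHK : H ⊆ K) (hω : 0 ≤ ω) : relMeasure H p ω ≤ relMeasure K p ω :=
  div_le_div_of_nonneg_right (measureReal_mono (inter_subset_inter_left _ hHK)
    (measure_inter_lt_top_of_right_ne_top measure_Ioo_lt_top.ne).ne) (by positivity)

theorem relMeasure_univ (hω : 0 < ω) : relMeasure univ p ω = 1 := by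
  rw [relMeasure, univ_inter, Real.volume_Ioo, ENNReal.toReal_ofReal (by linarith)]
  field_simp
  ring

theorem relMeasure_le_one (hω : 0 < ω) : relMeasure H p ω ≤ 1 :=
  (relMeasure_mono (subset_univ H) hω.le).trans_eq (relMeasure_univ hω)

theorem relMeasure_inter_Iio {b : ℝ} (h : p + ω ≤ b) :
    relMeasure (H ∩ Iio b) p ω = relMeasure H p ω := by
  have hsub : Ioo (p - ω) (p + ω) ⊆ Iio b := fun _ hx => hx.2.trans_le h
  rw [relMeasure, inter_assoc, inter_eq_right.2 hsub, relMeasure]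

theorem relMeasure_congr_ae (h : H =ᵐ[volume] K) : relMeasure H p ω = relMeasure K p ω := by
  have hI : (H ∩ Ioo (p - ω) (p + ω) : Set ℝ) =ᵐ[volume] (K ∩ Ioo (p - ω) (p + ω) : Set ℝ) :=
    h.inter (ae_eq_refl _)
  rw [relMeasure, relMeasure, measure_congr hI]

theorem relMeasure_compl (hH : MeasurableSet H) (hω : 0 < ω) :
    relMeasure Hᶜ p ω = 1 - relMeasure H p ω := by
  have hadd := measureReal_inter_add_sdiff (μ := volume) (s := Ioo (p - ω) (p + ω)) hH
    measure_Ioo_lt_top.ne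
  rw [Set.sdiff_eq, inter_comm _ H, inter_comm _ Hᶜ] at hadd
  rw [← relMeasure_univ (p := p) hω, relMeasure, relMeasure, relMeasure, univ_inter, ← sub_div]
  exact congrArg (· / (2 * ω)) (eq_sub_of_add_eq' hadd)

theorem relMeasure_preimage_sub_left (hH : MeasurableSet H) (c : ℝ) :
    relMeasure ((c - ·) ⁻¹' H) (c - p) ω = relMeasure H p ω := by
  have hI : Ioo (c - p - ω) (c - p + ω) = (c - ·) ⁻¹' Ioo (p - ω) (p + ω) := by
    rw [preimage_const_sub_Ioo]
    congr 1 <;> ring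
  rw [relMeasure, relMeasure, hI, ← preimage_inter,
    (Measure.measurePreserving_sub_left volume c).measure_preimage
      (hH.inter measurableSet_Ioo).nullMeasurableSet]

theorem exists_lt_relMeasure_of_tail_le (hH : MeasurableSet H) {b δ : ℝ} (hpb : p ≤ b)
    (htail : ∀ x > b, cumMeasure H x - cumMeasure H b ≤ (1 - 2 * δ) * (x - b))
    (hω : 0 < ω) (hdense : 1 - δ < relMeasure H p ω) :
    ∃ ω' > 0, p + ω' ≤ b ∧ 1 - δ < relMeasure H p ω' := by
  rcases le_or_gt (p + ω) b with hle | hgt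
  · exact ⟨ω, hω, hle, hdense⟩
  have hright := htail (p + ω) hgt
  have hleft := cumMeasure_sub_le hH (show p - ω ≤ p - (b - p) by linarith)
  rw [← not_le, relMeasure_le_iff hH hω, not_le] at hdense
  have hmid : (1 - δ) * (2 * (b - p)) < cumMeasure H b - cumMeasure H (p - (b - p)) := by
    linarith
  have hlt : p < b := by
    refine hpb.lt_of_ne fun h => hmid.ne ?_
    subst h
    simp
  refine ⟨b - p, sub_pos.2 hlt, by linarith, ?_⟩
  rwa [← not_le, relMeasure_le_iff hH (sub_pos.2 hlt), not_le, add_sub_cancel]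

theorem add_le_of_forall_relMeasure_le (hH : MeasurableSet H) {b m : ℝ} (hpb : p ≤ b)
    (hempty : Disjoint H (Ioi b)) (hm : 0 < m) (hhalf : 1 / 2 < relMeasure H p m)
    (hmax : ∀ ω > 0, relMeasure H p ω ≤ relMeasure H p m) : p + m ≤ b := by
  by_contra! hlt
  have hright : cumMeasure H (p + m) = cumMeasure H b :=
    cumMeasure_eq_of_disjoint_Ioo hH hlt.le (hempty.mono_right Ioo_subset_Ioi_self)
  have hleft := cumMeasure_sub_le hH (show p - m ≤ p - (b - p) by linarith)
  have hmid : cumMeasure H b - cumMeasure H (p - (b - p)) ≤ relMeasure H p m * (2 * (b - p)) := by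
    rcases hpb.eq_or_lt with rfl | hpb
    · simp
    · simpa using (relMeasure_le_iff hH (sub_pos.2 hpb)).1 (hmax _ (sub_pos.2 hpb))
  have htotal := relMeasure_mul (p := p) hH hm.le
  nlinarith

theorem le_relMeasure_of_le_of_Ioo_subset (hH : MeasurableSet H) {δ m n : ℝ} (hm : 0 < m)
    (hmn : m ≤ n) (hdense : 1 - δ ≤ relMeasure H p m) (hleft : Ioo (p - n) (p - m) ⊆ H)
    (hright : (1 - 2 * δ) * (n - m) ≤ cumMeasure H (p + n) - cumMeasure H (p + m)) :
    1 - δ ≤ relMeasure H p n := by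
  rw [le_relMeasure_iff hH hm] at hdense
  rw [le_relMeasure_iff hH (hm.trans_le hmn)]
  have hfull := cumMeasure_sub_of_Ioo_subset hH (by linarith) hleft
  linarith

end Density

namespace Config

variable {C : Config} {δ p x : ℝ}

theorem mem_carrier : x ∈ C.carrier ↔ x < 0 ∨ ∃ i, x ∈ Ioo (C.a i) (C.b i) := by
  simp only [carrier, mem_union, mem_Iio, mem_iUnion]

theorem mem_endpoints : x ∈ C.endpoints ↔ x = 0 ∨ (∃ i, C.a i = x) ∨ ∃ i, C.b i = x := by
  simp only [endpoints, mem_insert_iff, mem_union, mem_range]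

theorem measurableSet_carrier (C : Config) : MeasurableSet C.carrier :=
  measurableSet_Iio.union (.iUnion fun _ => measurableSet_Ioo)

theorem finite_endpoints (C : Config) : C.endpoints.Finite :=
  ((finite_range _).union (finite_range _)).insert _

theorem Iio_zero_subset_carrier (C : Config) : Iio 0 ⊆ C.carrier := subset_union_left

theorem strictMono_a (C : Config) : StrictMono C.a := fun i j hij =>
  (C.hab i).trans (C.hba i j hij)

theorem strictMono_b (C : Config) : StrictMono C.b := fun i j hij =>
  (C.hba i j hij).trans (C.hab j)

theorem b_pos (C : Config) (i : Fin C.r) : 0 < C.b i := (C.ha i).trans (C.hab i)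

theorem exists_a_le_of_mem_endpoints (hp : p ∈ C.endpoints) (hp0 : 0 < p) : ∃ i, C.a i ≤ p := by
  rcases mem_endpoints.1 hp with rfl | ⟨i, rfl⟩ | ⟨i, rfl⟩
  · exact absurd hp0 (lt_irrefl 0)
  · exact ⟨i, le_rfl⟩
  · exact ⟨i, (C.hab i).le⟩

theorem nonneg_of_mem_endpoints (hp : p ∈ C.endpoints) : 0 ≤ p := by
  rcases mem_endpoints.1 hp with rfl | ⟨i, rfl⟩ | ⟨i, rfl⟩
  · exact le_rfl
  · exact (C.ha i).le
  · exact (C.b_pos i).le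

theorem le_one_of_mem_endpoints (hlast : IsGreatest (range C.b) 1) (hp : p ∈ C.endpoints) :
    p ≤ 1 := by
  rcases mem_endpoints.1 hp with rfl | ⟨i, rfl⟩ | ⟨i, rfl⟩
  · exact zero_le_one
  · exact (C.hab i).le.trans (hlast.2 ⟨i, rfl⟩)
  · exact hlast.2 ⟨i, rfl⟩

theorem disjoint_carrier_Ioi_one (hlast : IsGreatest (range C.b) 1) :
    Disjoint C.carrier (Ioi 1) := by
  refine disjoint_left.2 fun x hx hx1 => ?_
  rcases mem_carrier.1 hx with h0 | ⟨i, hi⟩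
  · exact (h0.trans zero_lt_one).not_gt hx1
  · exact (hi.2.trans_le (hlast.2 ⟨i, rfl⟩)).not_gt hx1

theorem cumMeasure_eq_of_one_le (hlast : IsGreatest (range C.b) 1) (hx : 1 ≤ x) :
    cumMeasure C.carrier x = cumMeasure C.carrier 1 :=
  cumMeasure_eq_of_disjoint_Ioo C.measurableSet_carrier hx
    ((disjoint_carrier_Ioi_one hlast).mono_right Ioo_subset_Ioi_self)

theorem _root_.IsCounterexample.pos (hctr : IsCounterexample δ C) : 0 < δ := by
  obtain ⟨ω, hω, hnot⟩ := hctr 0 (mem_insert _ _)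
  by_contra! hδ
  exact hnot ⟨hδ.trans (relMeasure_nonneg hω.le), (relMeasure_le_one hω).trans (by linarith)⟩

section Truncation

/-- The configuration formed by the intervals of `C` up to and including the `i`-th one. -/
def trunc (C : Config) (i : Fin C.r) : Config where
  r := i + 1
  hr := Nat.succ_pos _
  a k := C.a (k.castLE i.isLt)
  b k := C.b (k.castLE i.isLt)
  ha _ := C.ha _
  hab _ := C.hab _
  hba _ _ hkl := C.hba _ _ hkl

theorem b_castLE_le (C : Config) (i : Fin C.r) (k : Fin (i + 1)) :
    C.b (k.castLE i.isLt) ≤ C.b i :=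
  C.strictMono_b.monotone (Nat.lt_succ_iff.1 k.isLt)

theorem carrier_trunc (C : Config) (i : Fin C.r) :
    (C.trunc i).carrier = C.carrier ∩ Iio (C.b i) := by
  ext x
  rw [mem_inter_iff, mem_carrier, mem_carrier]
  constructor
  · rintro (h0 | ⟨k, hk⟩)
    · exact ⟨Or.inl h0, h0.trans (C.b_pos i)⟩
    · exact ⟨Or.inr ⟨_, hk⟩, hk.2.trans_le (C.b_castLE_le i k)⟩
  · rintro ⟨h0 | ⟨k, hk⟩, hxi⟩
    · exact Or.inl h0
    · have hki : k ≤ i := by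
        by_contra! hik
        exact (hk.1.trans hxi).not_gt (C.hba i k hik)
      exact Or.inr ⟨⟨k, Nat.lt_succ_of_le hki⟩, hk⟩

theorem endpoints_trunc_subset (C : Config) (i : Fin C.r) :
    (C.trunc i).endpoints ⊆ C.endpoints ∩ Iic (C.b i) := by
  intro x hx
  rcases mem_endpoints.1 hx with rfl | ⟨k, rfl⟩ | ⟨k, rfl⟩
  · exact ⟨mem_insert _ _, (C.b_pos i).le⟩
  · exact ⟨mem_endpoints.2 (Or.inr (Or.inl ⟨_, rfl⟩)), (C.hab _).le.trans (C.b_castLE_le i k)⟩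
  · exact ⟨mem_endpoints.2 (Or.inr (Or.inr ⟨_, rfl⟩)), C.b_castLE_le i k⟩

theorem _root_.IsCounterexample.trunc (hctr : IsCounterexample δ C) {i : Fin C.r}
    (htail : ∀ x > C.b i, cumMeasure C.carrier x - cumMeasure C.carrier (C.b i) ≤
      (1 - 2 * δ) * (x - C.b i)) :
    IsCounterexample δ (C.trunc i) := by
  intro c hc
  obtain ⟨hcC, hci⟩ := C.endpoints_trunc_subset i hc
  obtain ⟨ω, hω, hnot⟩ := hctr c hcC
  rw [carrier_trunc]
  rcases lt_or_ge (relMeasure C.carrier c ω) δ with hlow | hlow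
  · refine ⟨ω, hω, fun h => h.1.not_gt ?_⟩
    exact (relMeasure_mono inter_subset_left hω.le).trans_lt hlow
  · have hhigh : 1 - δ < relMeasure C.carrier c ω := not_le.1 fun h => hnot ⟨hlow, h⟩
    obtain ⟨ω', hω', hle, hlt⟩ :=
      exists_lt_relMeasure_of_tail_le C.measurableSet_carrier hci htail hω hhigh
    exact ⟨ω', hω', fun h => h.2.not_gt (hlt.trans_eq (relMeasure_inter_Iio hle).symm)⟩

end Truncation

section OmegaMax

theorem bddAbove_setOf_relMeasure_notMem (hlast : IsGreatest (range C.b) 1) (hδ : 0 ≤ δ)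
    (hδ' : δ < 1 / 2) (p : ℝ) :
    BddAbove {ω : ℝ | 0 ≤ ω ∧ relMeasure C.carrier p ω ∉ Ioo δ (1 - δ)} := by
  have hpos : 0 < 1 - 2 * δ := by linarith
  refine ⟨(1 + |p|) / (1 - 2 * δ), fun ω ⟨hω, hnot⟩ => ?_⟩
  by_contra! hlt
  rw [div_lt_iff₀ hpos] at hlt
  have hωp : 1 + |p| < ω := by nlinarith
  obtain ⟨hp₁, hp₂⟩ := abs_le.1 (le_refl |p|)
  have hω' : 0 < ω := by linarith
  have hmeas := C.measurableSet_carrier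
  have hright := cumMeasure_eq_of_one_le hlast (show 1 ≤ p + ω by linarith)
  have hmid_le := cumMeasure_sub_le hmeas zero_le_one
  have hmid_nonneg := monotone_cumMeasure hmeas zero_le_one
  have hleft := cumMeasure_sub_of_Ioo_subset hmeas (show p - ω ≤ 0 by linarith)
    (Ioo_subset_Iio_self.trans C.Iio_zero_subset_carrier)
  refine hnot ⟨?_, ?_⟩
  · rw [← not_le, relMeasure_le_iff hmeas hω']
    linarith
  · rw [← not_le, le_relMeasure_iff hmeas hω']
    linarith

/- Clearing the denominator makes the condition closed also at `ω = 0`, where the quotient jumps to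
the junk value `0`. -/
theorem isClosed_setOf_relMeasure_notMem (C : Config) (hδ : 0 ≤ δ) (p : ℝ) :
    IsClosed {ω : ℝ | 0 ≤ ω ∧ relMeasure C.carrier p ω ∉ Ioo δ (1 - δ)} := by
  have hmeas := C.measurableSet_carrier
  have hcont := continuous_cumMeasure hmeas
  have heq : {ω : ℝ | 0 ≤ ω ∧ relMeasure C.carrier p ω ∉ Ioo δ (1 - δ)} =
      {ω | 0 ≤ ω} ∩
        ({ω | cumMeasure C.carrier (p + ω) - cumMeasure C.carrier (p - ω) ≤ δ * (2 * ω)} ∪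
        {ω | (1 - δ) * (2 * ω) ≤ cumMeasure C.carrier (p + ω) - cumMeasure C.carrier (p - ω)}) := by
    ext ω
    refine and_congr_right fun hω : 0 ≤ ω => ?_
    rcases hω.eq_or_lt with rfl | hω
    · simp [relMeasure, hδ]
    · rw [mem_Ioo, not_and_or, not_lt, not_lt, relMeasure_le_iff hmeas hω,
        le_relMeasure_iff hmeas hω]
      rfl
  rw [heq]
  exact (isClosed_le (by fun_prop) (by fun_prop)).inter
    ((isClosed_le (by fun_prop) (by fun_prop)).union (isClosed_le (by fun_prop) (by fun_prop)))

theorem relMeasure_omegaMax_notMem (hlast : IsGreatest (range C.b) 1) (hδ : 0 ≤ δ)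
    (hδ' : δ < 1 / 2) (p : ℝ) : relMeasure C.carrier p (omegaMax C δ p) ∉ Ioo δ (1 - δ) :=
  ((C.isClosed_setOf_relMeasure_notMem hδ p).csSup_mem
    ⟨0, le_rfl, fun h => by simpa [relMeasure] using h.1.trans_le' hδ⟩
    (bddAbove_setOf_relMeasure_notMem hlast hδ hδ' p)).2

theorem isBlack_or_isWhite (hlast : IsGreatest (range C.b) 1) (hδ : 0 ≤ δ) (hδ' : δ < 1 / 2)
    (hp : p ∈ C.endpoints) : IsBlack C δ p ∨ IsWhite C δ p := by
  have hnot := relMeasure_omegaMax_notMem hlast hδ hδ' p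
  rw [mem_Ioo, not_and_or, not_lt, not_lt] at hnot
  exact hnot.symm.imp (⟨hp, ·⟩) (⟨hp, ·⟩)

theorem le_omegaMax (hlast : IsGreatest (range C.b) 1) (hδ : 0 ≤ δ) (hδ' : δ < 1 / 2)
    {ω : ℝ} (hω : 0 ≤ ω) (hnot : relMeasure C.carrier p ω ∉ Ioo δ (1 - δ)) :
    ω ≤ omegaMax C δ p :=
  le_csSup (bddAbove_setOf_relMeasure_notMem hlast hδ hδ' p) ⟨hω, hnot⟩

theorem omegaMax_pos (hlast : IsGreatest (range C.b) 1) (hδ' : δ < 1 / 2)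
    (hctr : IsCounterexample δ C) (hp : p ∈ C.endpoints) : 0 < omegaMax C δ p := by
  obtain ⟨ω, hω, hnot⟩ := hctr p hp
  exact hω.trans_le (le_omegaMax hlast hctr.pos.le hδ' hω.le fun h =>
    hnot (Ioo_subset_Icc_self h))

end OmegaMax

section Reflection

/-- The left endpoint of the gap of `C` preceding its `i`-th interval. -/
def gapLeft (C : Config) (i : Fin C.r) : ℝ :=
  if _ : i.1 = 0 then 0 else C.b ⟨i - 1, by omega⟩

theorem gapLeft_zero (C : Config) : C.gapLeft ⟨0, C.hr⟩ = 0 := dif_pos rfl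

theorem gapLeft_succ (C : Config) {n : ℕ} (hn : n + 1 < C.r) :
    C.gapLeft ⟨n + 1, hn⟩ = C.b ⟨n, by omega⟩ := dif_neg n.succ_ne_zero

theorem gapLeft_nonneg (C : Config) (i : Fin C.r) : 0 ≤ C.gapLeft i := by
  rcases i with ⟨_ | n, hn⟩
  · rw [gapLeft_zero]
  · rw [gapLeft_succ]
    exact (C.b_pos _).le

theorem gapLeft_lt_a (C : Config) (i : Fin C.r) : C.gapLeft i < C.a i := by
  rcases i with ⟨_ | n, hn⟩
  · rw [gapLeft_zero]
    exact C.ha _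
  · rw [gapLeft_succ]
    exact C.hba _ _ n.lt_succ_self

theorem b_le_gapLeft (C : Config) {i j : Fin C.r} (hij : i < j) : C.b i ≤ C.gapLeft j := by
  rcases j with ⟨_ | n, hn⟩
  · exact absurd hij i.1.not_lt_zero
  · rw [gapLeft_succ]
    exact C.strictMono_b.monotone (Nat.lt_succ_iff.1 hij)

theorem insert_one_range_gapLeft (hlast : IsGreatest (range C.b) 1) :
    insert 1 (range C.gapLeft) = insert 0 (range C.b) := by
  apply Subset.antisymm
  · rintro x (rfl | ⟨⟨_ | n, hn⟩, rfl⟩)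
    · exact Or.inr hlast.1
    · exact Or.inl C.gapLeft_zero
    · exact Or.inr ⟨_, (C.gapLeft_succ hn).symm⟩
  · rintro x (rfl | ⟨i, rfl⟩)
    · exact Or.inr ⟨_, C.gapLeft_zero⟩
    · obtain hi | hi : i.1 + 1 < C.r ∨ C.r ≤ i.1 + 1 := lt_or_ge _ _
      · exact Or.inr ⟨_, C.gapLeft_succ hi⟩
      · obtain ⟨l, hl⟩ := hlast.1
        have hli : l ≤ i := Fin.le_def.2 (by omega)
        exact Or.inl ((hlast.2 ⟨i, rfl⟩).antisymm (hl ▸ C.strictMono_b.monotone hli))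

theorem notMem_carrier_iff (hlast : IsGreatest (range C.b) 1) (hx : x ∉ C.endpoints) :
    x ∉ C.carrier ↔ 1 < x ∨ ∃ i, x ∈ Ioo (C.gapLeft i) (C.a i) := by
  rw [mem_endpoints, not_or, not_or, not_exists, not_exists] at hx
  obtain ⟨hx0, hxa, hxb⟩ := hx
  constructor
  · intro hxC
    rw [mem_carrier, not_or, not_lt, not_exists] at hxC
    obtain ⟨l, hl⟩ := hlast.1
    rcases lt_or_ge x (C.b l) with hxl | hxl
    · obtain ⟨i, hxi, hmin⟩ := wellFounded_lt.has_min {i | x < C.b i} ⟨l, hxl⟩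
      have hxa : x < C.a i := not_le.1 fun h => hxC.2 i ⟨h.lt_of_ne (hxa i), hxi⟩
      refine Or.inr ⟨i, ?_, hxa⟩
      rcases i with ⟨_ | n, hn⟩
      · rw [gapLeft_zero]
        exact hxC.1.lt_of_ne' hx0
      · rw [gapLeft_succ]
        exact (not_lt.1 fun h => hmin _ h n.lt_succ_self).lt_of_ne (hxb _)
    · exact Or.inl (hl ▸ hxl.lt_of_ne (hxb l))
  · rintro (hx1 | ⟨i, hgi, hia⟩) hxC
    · exact disjoint_left.1 (disjoint_carrier_Ioi_one hlast) hxC hx1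
    rcases mem_carrier.1 hxC with h0 | ⟨k, hak, hkb⟩
    · exact ((C.gapLeft_nonneg i).trans_lt hgi).not_gt h0
    · have hki : k < i := C.strictMono_a.lt_iff_lt.1 (hak.trans hia)
      exact (hkb.trans_le (C.b_le_gapLeft hki)).not_gt hgi

/-- The image under `x ↦ 1 - x` of the complement of `C`, up to endpoints: its intervals are the
reflected gaps of `C`, in reverse order. It exchanges black and white endpoints. -/
def reflect (C : Config) (hlast : IsGreatest (range C.b) 1) : Config where
  r := C.r
  hr := C.hr
  a i := 1 - C.a i.rev
  b i := 1 - C.gapLeft i.rev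
  ha _ := sub_pos.2 ((C.hab _).trans_le (hlast.2 ⟨_, rfl⟩))
  hab _ := sub_lt_sub_left (C.gapLeft_lt_a _) 1
  hba _ _ hij :=
    sub_lt_sub_left ((C.hab _).trans_le (C.b_le_gapLeft (Fin.rev_lt_rev.2 hij))) 1

variable (hlast : IsGreatest (range C.b) 1)
include hlast

theorem isGreatest_range_b_reflect : IsGreatest (range (C.reflect hlast).b) 1 := by
  refine ⟨⟨Fin.rev (n := C.r) ⟨0, C.hr⟩, ?_⟩, ?_⟩
  · calc 1 - C.gapLeft (Fin.rev (Fin.rev ⟨0, C.hr⟩))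
      _ = 1 - C.gapLeft ⟨0, C.hr⟩ := by rw [Fin.rev_rev]
      _ = 1 := by rw [gapLeft_zero, sub_zero]
  · rintro _ ⟨i, rfl⟩
    exact sub_le_self 1 (C.gapLeft_nonneg _)

theorem one_sub_mem_endpoints_reflect : 1 - p ∈ (C.reflect hlast).endpoints ↔ p ∈ C.endpoints := by
  have ha : (∃ i, C.a i = p) ↔ ∃ i, (C.reflect hlast).a i = 1 - p :=
    Fin.rev_surjective.exists.trans (exists_congr fun _ => sub_right_inj.symm)
  have hb : (∃ i, C.gapLeft i = p) ↔ ∃ i, (C.reflect hlast).b i = 1 - p :=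
    Fin.rev_surjective.exists.trans (exists_congr fun _ => sub_right_inj.symm)
  have hends : p = 1 ∨ (∃ i, C.gapLeft i = p) ↔ p = 0 ∨ ∃ i, C.b i = p :=
    Set.ext_iff.1 (insert_one_range_gapLeft hlast) p
  rw [mem_endpoints, mem_endpoints, ← ha, ← hb, sub_eq_zero, eq_comm (a := 1)]
  tauto

theorem carrier_reflect_ae_eq :
    (C.reflect hlast).carrier =ᵐ[volume] (1 - ·) ⁻¹' C.carrierᶜ := by
  have hae : ∀ᵐ x : ℝ, 1 - x ∉ C.endpoints :=
    (Measure.measurePreserving_sub_left volume (1 : ℝ)).quasiMeasurePreserving.ae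
      (C.finite_endpoints.countable.ae_notMem volume)
  filter_upwards [hae] with x hx
  have hgaps : (∃ i, 1 - x ∈ Ioo (C.gapLeft i) (C.a i)) ↔
      ∃ i, x ∈ Ioo ((C.reflect hlast).a i) ((C.reflect hlast).b i) :=
    Fin.rev_surjective.exists.trans
      (exists_congr fun _ => and_comm.trans (and_congr sub_lt_comm lt_sub_comm))
  have hneg : 1 < 1 - x ↔ x < 0 := lt_sub_comm.trans (by rw [sub_self])
  exact propext <| mem_carrier.trans <|
    (or_congr hneg hgaps).symm.trans (notMem_carrier_iff hlast hx).symm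

theorem relMeasure_reflect {ω : ℝ} (hω : 0 < ω) :
    relMeasure (C.reflect hlast).carrier (1 - p) ω = 1 - relMeasure C.carrier p ω := by
  rw [relMeasure_congr_ae (carrier_reflect_ae_eq hlast),
    relMeasure_preimage_sub_left C.measurableSet_carrier.compl,
    relMeasure_compl C.measurableSet_carrier hω]

theorem omegaMax_reflect : omegaMax (C.reflect hlast) δ (1 - p) = omegaMax C δ p := by
  unfold omegaMax
  congr 1
  ext ω
  refine and_congr_right fun hω => not_congr ?_
  rcases hω.eq_or_lt with rfl | hω
  · simp [relMeasure]
  · rw [relMeasure_reflect hlast hω, mem_Ioo, mem_Ioo, sub_lt_sub_iff_left, lt_sub_comm, and_comm]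

theorem _root_.IsCounterexample.reflect (hctr : IsCounterexample δ C) :
    IsCounterexample δ (C.reflect hlast) := by
  intro c hc
  obtain ⟨p, rfl⟩ : ∃ p, c = 1 - p := ⟨1 - c, (sub_sub_cancel 1 c).symm⟩
  obtain ⟨ω, hω, hnot⟩ := hctr p ((one_sub_mem_endpoints_reflect hlast).1 hc)
  refine ⟨ω, hω, fun h => hnot ?_⟩
  rw [relMeasure_reflect hlast hω] at h
  exact ⟨(sub_le_sub_iff_left 1).1 h.2, le_sub_comm.1 h.1⟩

theorem _root_.IsWhite.reflect (hδ' : δ < 1 / 2) (hctr : IsCounterexample δ C)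
    (hp : IsWhite C δ p) : IsBlack (C.reflect hlast) δ (1 - p) := by
  refine ⟨(one_sub_mem_endpoints_reflect hlast).2 hp.1, ?_⟩
  rw [omegaMax_reflect, relMeasure_reflect hlast (omegaMax_pos hlast hδ' hctr hp.1)]
  exact sub_le_sub_left hp.2 1

end Reflection

end Config

/-- A counterexample to `K(δ)` with the least possible number of intervals, normalized so that its
last interval ends at `1`. -/
structure IsMinimalCounterexample (δ : ℝ) (C : Config) : Prop where
  isGreatest : IsGreatest (range C.b) 1
  isCounterexample : IsCounterexample δ C
  minimal : ∀ C' : Config, C'.r < C.r → ¬ IsCounterexample δ C'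

section Minimal

open Config

variable {C : Config} {δ p : ℝ}

namespace IsMinimalCounterexample

theorem reflect (hC : IsMinimalCounterexample δ C) :
    IsMinimalCounterexample δ (C.reflect hC.isGreatest) where
  isGreatest := isGreatest_range_b_reflect hC.isGreatest
  isCounterexample := hC.isCounterexample.reflect hC.isGreatest
  minimal := hC.minimal

theorem exists_gt_of_b_lt_one (hC : IsMinimalCounterexample δ C) {i : Fin C.r}
    (hi : C.b i < 1) :
    ∃ x > C.b i, (1 - 2 * δ) * (x - C.b i) <
      cumMeasure C.carrier x - cumMeasure C.carrier (C.b i) := by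
  by_contra! htail
  obtain ⟨l, hl⟩ := hC.isGreatest.1
  have hil : i < l := C.strictMono_b.lt_iff_lt.1 (hi.trans_eq hl.symm)
  exact hC.minimal (C.trunc i) ((Nat.succ_le_of_lt hil).trans_lt l.isLt)
    (hC.isCounterexample.trunc htail)

theorem exists_gt_of_lt_one (hC : IsMinimalCounterexample δ C) (hδ' : δ < 1 / 2) {i : Fin C.r}
    {y : ℝ} (hiy : C.a i ≤ y) (hy : y < 1) :
    ∃ x, y < x ∧ x ≤ 1 ∧
      (1 - 2 * δ) * (x - y) < cumMeasure C.carrier x - cumMeasure C.carrier y := by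
  have hmeas := C.measurableSet_carrier
  have hδ := hC.isCounterexample.pos
  obtain ⟨k, hky, hmax⟩ := wellFounded_gt.has_min {k | C.a k ≤ y} ⟨i, hiy⟩
  rcases lt_or_ge y (C.b k) with hyk | hky'
  · refine ⟨C.b k, hyk, hC.isGreatest.2 ⟨k, rfl⟩, ?_⟩
    rw [cumMeasure_sub_of_Ioo_subset hmeas hyk.le fun x hx =>
      mem_carrier.2 (Or.inr ⟨k, hky.trans_lt hx.1, hx.2⟩)]
    nlinarith
  have hgap : cumMeasure C.carrier y = cumMeasure C.carrier (C.b k) := by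
    refine cumMeasure_eq_of_disjoint_Ioo hmeas hky' (disjoint_left.2 fun x hx hxI => ?_)
    rcases mem_carrier.1 hx with h0 | ⟨j, haj, hjb⟩
    · exact ((C.b_pos k).trans hxI.1).not_gt h0
    · have hjk : j ≤ k := not_lt.1 (hmax j (haj.trans hxI.2).le)
      exact (hjb.trans_le (C.strictMono_b.monotone hjk)).not_gt hxI.1
  obtain ⟨x, hkx, hdense⟩ := hC.exists_gt_of_b_lt_one (hky'.trans_lt hy)
  have hyx : y < x := by
    by_contra! hxy
    have := monotone_cumMeasure hmeas hxy
    nlinarith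
  have hmin : cumMeasure C.carrier (min x 1) = cumMeasure C.carrier x := by
    rcases le_total x 1 with hx1 | hx1
    · rw [min_eq_left hx1]
    · rw [min_eq_right hx1, cumMeasure_eq_of_one_le hC.isGreatest hx1]
  refine ⟨min x 1, lt_min hyx hy, min_le_right _ _, ?_⟩
  rw [hmin, hgap]
  refine lt_of_le_of_lt (mul_le_mul_of_nonneg_left ?_ (by linarith)) hdense
  linarith [min_le_left x 1]

theorem mul_one_sub_le_cumMeasure_sub (hC : IsMinimalCounterexample δ C) (hδ' : δ < 1 / 2)
    {i : Fin C.r} {y : ℝ} (hiy : C.a i ≤ y) (hy : y ≤ 1) :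
    (1 - 2 * δ) * (1 - y) ≤ cumMeasure C.carrier 1 - cumMeasure C.carrier y := by
  have hcont : Continuous fun x => cumMeasure C.carrier x - (1 - 2 * δ) * x := by
    have := continuous_cumMeasure C.measurableSet_carrier
    fun_prop
  obtain ⟨x, ⟨hix, hx1⟩, hmax⟩ :=
    isCompact_Icc.exists_isMaxOn ⟨y, hiy, hy⟩ hcont.continuousOn
  obtain rfl : x = 1 := by
    refine hx1.antisymm (not_lt.1 fun hlt => ?_)
    obtain ⟨z, hxz, hz1, hdense⟩ := hC.exists_gt_of_lt_one hδ' hix hlt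
    have := hmax ⟨hix.trans hxz.le, hz1⟩
    rw [mem_ofPred_eq] at this
    linarith
  have := hmax ⟨hiy, hy⟩
  rw [mem_ofPred_eq] at this
  linarith

end IsMinimalCounterexample

theorem IsBlack.Ioo_subset_of_forall_relMeasure_le (hC : IsMinimalCounterexample δ C)
    (hδ' : δ < 1 / 2) (hp : IsBlack C δ p) (hp0 : 0 < p)
    (hω : p ≤ 1 / 2 → omegaMax C δ p < 1 - p) {m : ℝ} (hm : 0 < m)
    (hmax : ∀ ω > 0, relMeasure C.carrier p ω ≤ relMeasure C.carrier p m) :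
    Ioo (p - m) (p + m) ⊆ Ioo 0 1 := by
  have hmeas := C.measurableSet_carrier
  have hdense : 1 - δ ≤ relMeasure C.carrier p m :=
    hp.2.trans (hmax _ (omegaMax_pos hC.isGreatest hδ' hC.isCounterexample hp.1))
  have hright : p + m ≤ 1 :=
    add_le_of_forall_relMeasure_le hmeas (le_one_of_mem_endpoints hC.isGreatest hp.1)
      (disjoint_carrier_Ioi_one hC.isGreatest) hm (by linarith) hmax
  refine Ioo_subset_Ioo (not_lt.1 fun hleft => ?_) hright
  refine (hω (by linarith)).not_ge (le_omegaMax hC.isGreatest hC.isCounterexample.pos.le hδ'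
    (by linarith) fun h => h.2.not_ge ?_)
  obtain ⟨i, hi⟩ := exists_a_le_of_mem_endpoints hp.1 hp0
  have htail := hC.mul_one_sub_le_cumMeasure_sub hδ' (show C.a i ≤ p + m by linarith) hright
  refine le_relMeasure_of_le_of_Ioo_subset hmeas hm (by linarith) hdense
    (fun x hx => C.Iio_zero_subset_carrier (hx.2.trans hleft)) ?_
  rwa [add_sub_cancel, sub_sub]

theorem IsWhite.Ioo_subset_of_forall_le_relMeasure (hC : IsMinimalCounterexample δ C)
    (hδ' : δ < 1 / 2) (hp : IsWhite C δ p) (hp1 : p < 1)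
    (hω : 1 / 2 ≤ p → omegaMax C δ p < p) {m : ℝ} (hm : 0 < m)
    (hmin : ∀ ω > 0, relMeasure C.carrier p m ≤ relMeasure C.carrier p ω) :
    Ioo (p - m) (p + m) ⊆ Ioo 0 1 := by
  have hlast := hC.isGreatest
  have hsub : Ioo (1 - p - m) (1 - p + m) ⊆ Ioo 0 1 := by
    refine (hp.reflect hlast hδ' hC.isCounterexample).Ioo_subset_of_forall_relMeasure_le
      hC.reflect hδ' (sub_pos.2 hp1) (fun hp2 => ?_) hm fun ω hω => ?_
    · rw [omegaMax_reflect, sub_sub_cancel]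
      exact hω (by linarith)
    · rw [relMeasure_reflect hlast hω, relMeasure_reflect hlast hm]
      exact sub_le_sub_left (hmin ω hω) 1
  obtain ⟨h₁, h₂⟩ := (Ioo_subset_Ioo_iff (by linarith)).1 hsub
  exact Ioo_subset_Ioo (by linarith) (by linarith)

end Minimal

theorem mu_interval_subset_general
    (δ : ℝ) (hδ : δ < 1 / 2)
    (C : Config) (hlast : IsGreatest (range C.b) 1)
    (hctr : IsCounterexample δ C)
    (hmin : ∀ C' : Config, C'.r < C.r → ¬ IsCounterexample δ C')
    (vB vW : ℝ)
    (hvB : IsGreatest {v : ℝ | IsBlack C δ v ∧ v ≤ 1 / 2 ∧ 1 - v ≤ omegaMax C δ v} vB)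
    (hvW : IsLeast {v : ℝ | IsWhite C δ v ∧ 1 / 2 ≤ v ∧ v ≤ omegaMax C δ v} vW)
    (μ : ℝ → ℝ)
    (hμB : ∀ v : ℝ, IsBlack C δ v → 0 < μ v ∧
      ∀ ω > 0, relMeasure C.carrier v ω ≤ relMeasure C.carrier v (μ v))
    (hμW : ∀ v : ℝ, IsWhite C δ v → 0 < μ v ∧
      ∀ ω > 0, relMeasure C.carrier v (μ v) ≤ relMeasure C.carrier v ω) :
    ∀ p ∈ C.endpoints, vB < p → p < vW →
      Ioo (p - μ p) (p + μ p) ⊆ Ioo (0 : ℝ) 1 := by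
  intro p hp hBp hpW
  have hC : IsMinimalCounterexample δ C := ⟨hlast, hctr, hmin⟩
  rcases Config.isBlack_or_isWhite hlast hctr.pos.le hδ hp with hblack | hwhite
  · obtain ⟨hm, hmax⟩ := hμB p hblack
    refine hblack.Ioo_subset_of_forall_relMeasure_le hC hδ
      ((Config.nonneg_of_mem_endpoints hvB.1.1.1).trans_lt hBp) (fun hp2 => ?_) hm hmax
    exact not_le.1 fun hω => hBp.not_ge (hvB.2 ⟨hblack, hp2, hω⟩)
  · obtain ⟨hm, hmin⟩ := hμW p hwhite
    refine hwhite.Ioo_subset_of_forall_le_relMeasure hC hδ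
      (hpW.trans_le (Config.le_one_of_mem_endpoints hlast hvW.1.1.1)) (fun hp2 => ?_) hm hmin
    exact not_le.1 fun hω => hpW.not_ge (hvW.2 ⟨hwhite, hp2, hω⟩)

/-- With `μ(v)` an extremal radius for each black/white endpoint, every endpoint `p` of `C`
lying strictly between `v_B` and `v_W` satisfies `I_{μ(p)}(p) ⊆ (0,1)`. -/
theorem mu_interval_subset
    (δ : ℝ) (hδ1 : 1 / 4 < δ) (hδ2 : δ < 1 / 2)
    (C : Config) (hlast : IsGreatest (range C.b) 1)
    (hctr : IsCounterexample δ C)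
    (hmin : ∀ C' : Config, C'.r < C.r → ¬ IsCounterexample δ C')
    (vB vW : ℝ)
    (hvB : IsGreatest {v : ℝ | IsBlack C δ v ∧ v ≤ 1 / 2 ∧ 1 - v ≤ omegaMax C δ v} vB)
    (hvW : IsLeast {v : ℝ | IsWhite C δ v ∧ 1 / 2 ≤ v ∧ v ≤ omegaMax C δ v} vW)
    (μ : ℝ → ℝ)
    (hμB : ∀ v : ℝ, IsBlack C δ v → 0 < μ v ∧
      ∀ ω > 0, relMeasure C.carrier v ω ≤ relMeasure C.carrier v (μ v))
    (hμW : ∀ v : ℝ, IsWhite C δ v → 0 < μ v ∧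
      ∀ ω > 0, relMeasure C.carrier v (μ v) ≤ relMeasure C.carrier v ω) :
    ∀ p ∈ C.endpoints, vB < p → p < vW →
      Ioo (p - μ p) (p + μ p) ⊆ Ioo (0 : ℝ) 1 := by
  exact mu_interval_subset_general δ hδ2 C hlast hctr hmin vB vW hvB hvW μ hμB hμW
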